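/- For all natural numbers m, n, p, r with n > r and m ≥ ⌈p/r⌉·(n+1), Breaker has a winning strategy for the (p, p+5r)-crossing game on S_{m×n}. -/

import Mathlib

namespace CrossingGames

/-- A vertex of the square integer lattice `ℤ²`. -/
abbrev Vtx : Type := ℤ × ℤ

/-- An edge of the square integer lattice `ℤ²`, encoded as a base vertex together with a
direction: `(v, true)` is the horizontal edge joining `v = (x,y)` to `(x+1,y)`, while
`(v, false)` is the vertical edge joining `v = (x,y)` to `(x,y+1)`. -/
abbrev Edge : Type := Vtx × Bool

/-- The two endpoints of an edge. -/
def ends (e : Edge) : Vtx × Vtx :=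
  (e.1, if e.2 then (e.1.1 + 1, e.1.2) else (e.1.1, e.1.2 + 1))

/-- The edge `e` joins the vertices `u` and `v`. -/
def joins (e : Edge) (u v : Vtx) : Prop :=
  ((ends e).1 = u ∧ (ends e).2 = v) ∨ ((ends e).1 = v ∧ (ends e).2 = u)

/-- The vertex set of the grid `Λ_{m×n}`: all `(x,y) ∈ ℤ²` with `1 ≤ x ≤ m`, `1 ≤ y ≤ n`. -/
def lamVtx (m n : ℕ) : Set Vtx :=
  {v | 1 ≤ v.1 ∧ v.1 ≤ (m : ℤ) ∧ 1 ≤ v.2 ∧ v.2 ≤ (n : ℤ)}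

/-- The edge set of the grid `Λ_{m×n}`: lattice edges with both endpoints in `Λ_{m×n}`. -/
def lamEdges (m n : ℕ) : Set Edge :=
  {e | (ends e).1 ∈ lamVtx m n ∧ (ends e).2 ∈ lamVtx m n}

/-- The edge set of the board `S_{m×n}`: the grid `Λ_{m×n}` with all of its leftmost and
rightmost vertical edges deleted. -/
def sEdges (m n : ℕ) : Set Edge :=
  {e ∈ lamEdges m n | ¬ (e.2 = false ∧ (e.1.1 = 1 ∨ e.1.1 = (m : ℤ)))}

/-- The list of consecutive pairs of a list. -/
def cp {α : Type*} (l : List α) : List (α × α) := l.zip l.tail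

/-- `S` contains all the edges of a left-right crossing path of a board with `m` columns
and `n` rows: a path of edges of `S` joining a vertex `(1,y)` on the left-hand side of the
board to a vertex `(m,y')` on its right-hand side. -/
def HasCrossing (m n : ℕ) (S : Set Edge) : Prop :=
  ∃ l : List Vtx,
    (∃ v, l.head? = some v ∧ v.1 = 1) ∧
    (∃ v, l.getLast? = some v ∧ v.1 = (m : ℤ)) ∧
    (∀ v ∈ l, v ∈ lamVtx m n) ∧
    ∀ p ∈ cp l, ∃ e ∈ S, joins e p.1 p.2

/-- A strategy: given the list of all moves played so far (oldest first), produce the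
next move (a finite set of edges to claim). -/
abbrev Strategy : Type := List (Finset Edge) → Finset Edge

/-- The union of the moves sitting in positions of the given parity of a history
(`true`: positions 0, 2, 4, …; `false`: positions 1, 3, 5, …). -/
def altUnion : Bool → List (Finset Edge) → Finset Edge
  | _, [] => ∅
  | true, mv :: h => mv ∪ altUnion false h
  | false, _ :: h => altUnion true h

/-- All edges claimed by the player moving first (i.e. on even positions) in a history. -/
def firstClaimed (h : List (Finset Edge)) : Finset Edge := altUnion true h

/-- All edges claimed by the player moving second (i.e. on odd positions) in a history. -/
def secondClaimed (h : List (Finset Edge)) : Finset Edge := altUnion false h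

/-- All edges claimed so far in a history. -/
def allClaimed (h : List (Finset Edge)) : Finset Edge := h.foldr (· ∪ ·) ∅

/-- The history of moves (oldest first) after `t` full rounds, when the player moving
first uses strategy `σ` and the player moving second uses strategy `τ`. -/
def hist (σ τ : Strategy) : ℕ → List (Finset Edge)
  | 0 => []
  | t + 1 =>
    let h := hist σ τ t
    h ++ [σ h, τ (h ++ [σ h])]

/-- The move `mv` is legal on `board` after the history `h` for a player of bias `k`: it
consists of as-yet-unclaimed edges of the board, and there are exactly `k` of them, unless
fewer than `k` unclaimed edges remain, in which case the player claims all of them. -/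
def LegalMove (board : Set Edge) (h : List (Finset Edge)) (k : ℕ) (mv : Finset Edge) : Prop :=
  (↑mv : Set Edge) ⊆ board \ ↑(allClaimed h) ∧
    (mv.card = k ∨ (mv.card < k ∧ board \ ↑(allClaimed h) ⊆ (↑mv : Set Edge)))

/-- The player moving first (with bias `p`) always moves legally when playing `σ`
against `τ`. -/
def FirstLegal (board : Set Edge) (p : ℕ) (σ τ : Strategy) : Prop :=
  ∀ t, LegalMove board (hist σ τ t) p (σ (hist σ τ t))

/-- The player moving second (with bias `q`) always moves legally when playing `τ`
against `σ`. -/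
def SecondLegal (board : Set Edge) (q : ℕ) (σ τ : Strategy) : Prop :=
  ∀ t, LegalMove board (hist σ τ t ++ [σ (hist σ τ t)]) q (τ (hist σ τ t ++ [σ (hist σ τ t)]))

/-- Maker (playing first and claiming `p` edges per turn) has a winning strategy for the
Maker–Breaker game on `board` in which Breaker claims `q` edges per turn: she can
guarantee that at some point her claimed edges satisfy the winning condition `win`. -/
def MakerWins (board : Set Edge) (win : Set Edge → Prop) (p q : ℕ) : Prop :=
  ∃ σ : Strategy, ∀ τ : Strategy, SecondLegal board q σ τ →
    FirstLegal board p σ τ ∧ ∃ t, win ↑(firstClaimed (hist σ τ t))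

/-- Breaker (playing second and claiming `q` edges per turn) has a winning strategy for
the Maker–Breaker game on `board` in which Maker claims `p` edges per turn: he can
forever prevent Maker's claimed edges from satisfying the winning condition `win`. -/
def BreakerWins (board : Set Edge) (win : Set Edge → Prop) (p q : ℕ) : Prop :=
  ∃ τ : Strategy, ∀ σ : Strategy, FirstLegal board p σ τ →
    SecondLegal board q σ τ ∧ ∀ t, ¬ win ↑(firstClaimed (hist σ τ t))

/-!
The board contains `⌊p/(r+1)⌋ + 1` disjoint translates of `S_{(n+1)×n}`, so one of them holds at
most `r` of the edges of Maker's first turn. Breaker uses his `5r` extra edges to make these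
useless: an edge has at most six adjacent edges, and once Breaker holds five of them, no path of
Maker passes through it. (If fewer than six are free, Breaker takes all of them. A path of Maker
could then still use chains of her opening edges, but never leave such a chain, and `r < n` edges
are too few to cross the block.) Every crossing of the whole board crosses the block, so it remains
to survive the `(p, p)`-crossing game on `S_{(n+1)×n}` with Breaker to move. This board is its own
dual, and a crossing path always meets a dual crossing path: if it did not, the signed number of
times that the dual path crosses the ray pointing left from a vertex would be constant along the
path, but it is `0` on the left-hand side and `1` on the right-hand side. So strategy stealing
applies: a Maker who wins there as second player could be played against her own dual copy, and
both would win.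
-/

section PositionalGame

variable {α β : Type*} {win win₀ win₁ : Set α → Prop} {p : ℕ}

/-- A turn in the positional Maker–Breaker game with equal biases: a set of at most `p` elements
that avoids those held by the opponent. Claiming fewer elements, or elements one already holds,
is allowed, which makes the game monotone in both positions. -/
def IsTurn (p : ℕ) (move opponent : Set α) : Prop :=
  move.encard ≤ p ∧ Disjoint move opponent

/-- In the positional game with equal biases `p`, with Breaker to move, Maker holding `A` and
Breaker holding `B`, Maker can force her set to satisfy `win` in finitely many turns. The
replies form a function of Breaker's turn because an existential quantifier below the universal
one is not allowed in an inductive predicate. -/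
inductive MakerForces (win : Set α → Prop) (p : ℕ) : Set α → Set α → Prop
  | won {A B : Set α} (hA : win A) : MakerForces win p A B
  | reply {A B : Set α} (r : Set α → Set α)
      (isTurn : ∀ b, IsTurn p b A → IsTurn p (r b) (B ∪ b))
      (forces : ∀ b, IsTurn p b A → MakerForces win p (A ∪ r b) (B ∪ b)) :
      MakerForces win p A B

lemma isTurn_empty (p : ℕ) (A : Set α) : IsTurn p ∅ A := by
  simp [IsTurn]

lemma IsTurn.mono {b A A' : Set α} (hb : IsTurn p b A') (hA : A ⊆ A') : IsTurn p b A :=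
  ⟨hb.1, hb.2.mono_right hA⟩

lemma IsTurn.preimage {b A : Set α} (hb : IsTurn p b A) (e : β ≃ α) :
    IsTurn p (e ⁻¹' b) (e ⁻¹' A) :=
  ⟨(Set.encard_preimage_of_bijective e.bijective b).trans_le hb.1, hb.2.preimage e⟩

lemma exists_isTurn_of_not_makerForces {A B : Set α} (h : ¬ MakerForces win p A B) :
    ∃ b, IsTurn p b A ∧ ∀ a, IsTurn p a (B ∪ b) → ¬ MakerForces win p (A ∪ a) (B ∪ b) := by
  by_contra! hreply
  choose! r hturn hforces using hreply
  exact h (.reply r hturn hforces)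

namespace MakerForces

lemma mono (hwin : Monotone win) {A B : Set α} (h : MakerForces win p A B) :
    ∀ {A' B' : Set α}, A ⊆ A' → B' ⊆ B → MakerForces win p A' B' := by
  induction h with
  | won hA => exact fun hAA' _ => .won (hwin hAA' hA)
  | reply r hturn _ ih =>
    intro A' B' hA hB
    refine .reply r (fun b hb => ?_) (fun b hb => ?_)
    · exact (hturn b (hb.mono hA)).mono (Set.union_subset_union_left b hB)
    · exact ih b (hb.mono hA) (Set.union_subset_union_left _ hA) (Set.union_subset_union_left _ hB)

lemma preimage (e : β ≃ α) {A B : Set α} (h : MakerForces win p A B) :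
    MakerForces (fun S => win (e '' S)) p (e ⁻¹' A) (e ⁻¹' B) := by
  induction h with
  | won hA => exact .won (by simpa using hA)
  | @reply A B r hturn _ ih =>
    have himage {b : Set β} (hb : IsTurn p b (e ⁻¹' A)) : IsTurn p (e '' b) A := by
      simpa [Equiv.image_eq_preimage_symm] using hb.preimage e.symm
    have hunion (b : Set β) : e ⁻¹' (B ∪ e '' b) = e ⁻¹' B ∪ b := by simp
    refine .reply (fun b => e ⁻¹' r (e '' b)) (fun b hb => ?_) (fun b hb => ?_)
    · exact hunion b ▸ (hturn _ (himage hb)).preimage e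
    · exact hunion b ▸ ih _ (himage hb)

/-- Maker must win in particular against a Breaker who passes from now on. -/
lemma exists_win_disjoint {A B C : Set α} (h : MakerForces win p A B) (hC : C ⊆ B)
    (hAC : Disjoint A C) : ∃ S, win S ∧ Disjoint S C := by
  induction h with
  | won hA => exact ⟨_, hA, hAC⟩
  | @reply A B r hturn _ ih =>
    have hpass := isTurn_empty p A
    refine ih ∅ hpass (hC.trans Set.subset_union_left) (hAC.union_left ?_)
    exact (hturn ∅ hpass).2.mono_right (hC.trans Set.subset_union_left)

/-- Strategy stealing: let two Makers who both move second play against each other. The one in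
the second game is ahead by the set `A₁ \ B₀`, which the Breaker of the first game claims; the
reply to it is then claimed by the Breaker of the second game. -/
lemma false_of_forall_not_disjoint
    (hwin : ∀ S T, win₀ S → win₁ T → ¬ Disjoint S T) {A₀ B₀ A₁ B₁ : Set α}
    (h₀ : MakerForces win₀ p A₀ B₀) (h₁ : MakerForces win₁ p A₁ B₁)
    (hsub : A₀ ⊆ B₁) (hdisj : Disjoint A₀ A₁) (hlead : (A₁ \ B₀).encard ≤ p) : False := by
  induction h₀ generalizing A₁ B₁ with
  | won hA =>
    obtain ⟨T, hT, hTA⟩ := h₁.exists_win_disjoint hsub hdisj.symm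
    exact hwin _ T hA hT hTA.symm
  | @reply A₀ B₀ r₀ hturn₀ hforces₀ ih =>
    have hlead_turn : IsTurn p (A₁ \ B₀) A₀ := ⟨hlead, hdisj.symm.mono_left Set.sdiff_subset⟩
    have hcaught_up : A₁ ⊆ B₀ ∪ A₁ \ B₀ := by simp
    obtain ⟨hcard, hdisj_reply⟩ := hturn₀ _ hlead_turn
    set a₀ := r₀ (A₁ \ B₀)
    have hdisj' : Disjoint (A₀ ∪ a₀) A₁ := hdisj.union_left (hdisj_reply.mono_right hcaught_up)
    cases h₁ with
    | won hA =>
      obtain ⟨S, hS, hSA⟩ := (hforces₀ _ hlead_turn).exists_win_disjoint hcaught_up hdisj'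
      exact hwin S _ hS hA hSA
    | reply r₁ hturn₁ hforces₁ =>
      have hturn : IsTurn p a₀ A₁ := ⟨hcard, hdisj'.mono_left Set.subset_union_right⟩
      obtain ⟨hcard₁, hdisj₁⟩ := hturn₁ a₀ hturn
      have hsub' : A₀ ∪ a₀ ⊆ B₁ ∪ a₀ := Set.union_subset_union_left a₀ hsub
      refine ih _ hlead_turn (hforces₁ a₀ hturn) hsub' ?_ ?_
      · exact hdisj'.union_right (hdisj₁.symm.mono_left hsub')
      · refine (Set.encard_le_encard ?_).trans hcard₁
        grind

end MakerForces

theorem not_makerForces_of_selfDual (e : α ≃ α)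
    (hwin : ∀ S T, win S → win (e '' T) → ¬ Disjoint S T) : ¬ MakerForces win p ∅ ∅ := fun h =>
  h.false_of_forall_not_disjoint hwin (h.preimage e) (Set.empty_subset _)
    (Set.empty_disjoint _) (by simp)

end PositionalGame

section Strategies

variable {board : Set Edge} {win : Set Edge → Prop} {p q : ℕ}

lemma altUnion_append_of_even : ∀ {h : List (Finset Edge)} (b : Bool) (l : List (Finset Edge)),
    Even h.length → altUnion b (h ++ l) = altUnion b h ∪ altUnion b l
  | [], b, l, _ => by cases b <;> simp [altUnion]
  | [_], _, _, heven => by simp at heven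
  | _ :: _ :: h, b, l, heven => by
    have ih := altUnion_append_of_even (h := h) b l (by simpa [Nat.even_add_one] using heven)
    cases b <;> simp [altUnion, ih]

lemma even_length_hist (σ τ : Strategy) (t : ℕ) : Even (hist σ τ t).length := by
  induction t with
  | zero => simp [hist]
  | succ t ih => simpa [hist] using ih.add even_two

lemma firstClaimed_hist_append (σ τ : Strategy) (t : ℕ) (mv : Finset Edge) :
    firstClaimed (hist σ τ t ++ [mv]) = firstClaimed (hist σ τ t) ∪ mv := by
  simp [firstClaimed, altUnion_append_of_even _ _ (even_length_hist σ τ t), altUnion]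

lemma secondClaimed_hist_append (σ τ : Strategy) (t : ℕ) (mv : Finset Edge) :
    secondClaimed (hist σ τ t ++ [mv]) = secondClaimed (hist σ τ t) := by
  simp [secondClaimed, altUnion_append_of_even _ _ (even_length_hist σ τ t), altUnion]

lemma firstClaimed_hist_succ (σ τ : Strategy) (t : ℕ) :
    firstClaimed (hist σ τ (t + 1)) = firstClaimed (hist σ τ t) ∪ σ (hist σ τ t) := by
  simp [firstClaimed, hist, altUnion_append_of_even _ _ (even_length_hist σ τ t), altUnion]

lemma secondClaimed_hist_succ (σ τ : Strategy) (t : ℕ) :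
    secondClaimed (hist σ τ (t + 1)) =
      secondClaimed (hist σ τ t) ∪ τ (hist σ τ t ++ [σ (hist σ τ t)]) := by
  simp [secondClaimed, hist, altUnion_append_of_even _ _ (even_length_hist σ τ t), altUnion]

lemma allClaimed_eq_union (h : List (Finset Edge)) :
    allClaimed h = firstClaimed h ∪ secondClaimed h := by
  induction h with
  | nil => rfl
  | cons mv h ih =>
    calc allClaimed (mv :: h) = mv ∪ (firstClaimed h ∪ secondClaimed h) := congrArg (mv ∪ ·) ih
      _ = mv ∪ secondClaimed h ∪ firstClaimed h := by
        rw [Finset.union_comm (firstClaimed h), Finset.union_assoc]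

/-- `LegalMove` in terms of the set `C` of edges claimed so far instead of the history. -/
def IsLegalClaim (board : Set Edge) (C : Finset Edge) (k : ℕ) (mv : Finset Edge) : Prop :=
  (↑mv : Set Edge) ⊆ board \ ↑C ∧
    (mv.card = k ∨ (mv.card < k ∧ board \ ↑C ⊆ (↑mv : Set Edge)))

lemma legalMove_iff {h : List (Finset Edge)} {k : ℕ} {mv : Finset Edge} :
    LegalMove board h k mv ↔ IsLegalClaim board (firstClaimed h ∪ secondClaimed h) k mv := by
  rw [← allClaimed_eq_union]
  rfl

namespace IsLegalClaim

variable {C mv : Finset Edge} {k : ℕ}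

lemma subset_board (h : IsLegalClaim board C k mv) : (mv : Set Edge) ⊆ board :=
  fun _ he => (h.1 he).1

lemma disjoint (h : IsLegalClaim board C k mv) : Disjoint (mv : Set Edge) C :=
  Set.disjoint_left.2 fun _ he => (h.1 he).2

lemma card_le (h : IsLegalClaim board C k mv) : mv.card ≤ k :=
  h.2.elim Eq.le fun h => h.1.le

end IsLegalClaim

lemma exists_isLegalClaim_superset (hboard : board.Finite) {C : Finset Edge} {X : Set Edge}
    (hX : X ⊆ board \ C) (hcard : X.encard ≤ q) :
    ∃ mv : Finset Edge, X ⊆ mv ∧ IsLegalClaim board C q mv := by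
  have hfree : (board \ (C : Set Edge)).Finite := hboard.sdiff
  rcases le_or_gt (q : ℕ∞) (board \ (C : Set Edge)).encard with hle | hlt
  · obtain ⟨Y, hXY, hYfree, hY⟩ := Set.exists_superset_subset_encard_eq hX hcard hle
    lift Y to Finset Edge using hfree.subset hYfree
    exact ⟨Y, hXY, hYfree, .inl (by simpa using hY)⟩
  · obtain ⟨F, hF⟩ := hfree.exists_finset_coe
    refine ⟨F, hF ▸ hX, hF.le, .inr ⟨?_, hF.ge⟩⟩
    simpa [← hF] using hlt

/-- The invariant `J A B` speaks about the positions in which Breaker is to move. -/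
theorem breakerWins_of_invariant (hwin : Monotone win) (J : Finset Edge → Finset Edge → Prop)
    (hstart : ∀ a, IsLegalClaim board ∅ p a → J a ∅)
    (hstep : ∀ A B, J A B → ∃ b, IsLegalClaim board (A ∪ B) q b ∧
      ∀ a, IsLegalClaim board (A ∪ (B ∪ b)) p a → J (A ∪ a) (B ∪ b))
    (hJ : ∀ A B, J A B → ¬ win A) : BreakerWins board win p q := by
  choose! reply hlegal hnext using hstep
  set τ : Strategy := fun h => reply (firstClaimed h) (secondClaimed h)
  refine ⟨τ, fun σ hσ => ?_⟩
  simp only [FirstLegal, SecondLegal, legalMove_iff, firstClaimed_hist_append,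
    secondClaimed_hist_append] at hσ ⊢
  have hreply (t : ℕ) : τ (hist σ τ t ++ [σ (hist σ τ t)]) =
      reply (firstClaimed (hist σ τ t) ∪ σ (hist σ τ t)) (secondClaimed (hist σ τ t)) :=
    congrArg₂ reply (firstClaimed_hist_append ..) (secondClaimed_hist_append ..)
  have hinv (t : ℕ) :
      J (firstClaimed (hist σ τ t) ∪ σ (hist σ τ t)) (secondClaimed (hist σ τ t)) := by
    induction t with
    | zero => simpa [hist, firstClaimed, secondClaimed, altUnion] using hstart _ (hσ 0)
    | succ t ih =>
      have hlegal_next := hσ (t + 1)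
      rw [secondClaimed_hist_succ, firstClaimed_hist_succ, hreply] at *
      exact hnext _ _ ih _ hlegal_next
  refine ⟨fun t => hreply t ▸ hlegal _ _ (hinv t), fun t hwon => hJ _ _ (hinv t) (hwin ?_ hwon)⟩
  exact_mod_cast Finset.subset_union_left

/-- The invariant of Breaker's play after an opening `M` of Maker, when Maker holds `A`, Breaker
holds `B` and Breaker is to move. Breaker still has to claim at most `c` edges of `N`, and he
survives the positional game for `win'` in which Maker's opening is taken away from her. -/
structure OpeningInvariant (board : Set Edge) (win' : Set Edge → Prop) (p c : ℕ)
    (M N A B : Finset Edge) : Prop where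
  opening_subset : M ⊆ A
  subset_board : (A : Set Edge) ⊆ board
  disjoint_neutral : Disjoint A N
  debt_le : (N \ B).card ≤ c
  not_makerForces : ¬ MakerForces win' p (A \ M : Set Edge) (B ∪ N ∪ M ∪ boardᶜ)

lemma exists_isLegalClaim_covering (hboard : board.Finite) {c : ℕ} {A B N : Finset Edge}
    {b : Set Edge} (hb_card : b.encard ≤ p) (hN : (N : Set Edge) ⊆ board) (hAN : Disjoint A N)
    (hdebt : (N \ B).card ≤ c) :
    ∃ mv, IsLegalClaim board (A ∪ B) (p + c) mv ∧ N ⊆ B ∪ mv ∧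
      ∀ e ∈ b, e ∈ board → e ∉ A → e ∈ B ∪ mv := by
  have hX : (b ∩ board) \ (A ∪ B) ∪ (N \ B : Finset Edge) ⊆ board \ (A ∪ B : Finset Edge) := by
    have := Set.disjoint_left.1 (Finset.disjoint_coe.2 hAN)
    grind
  have hX_card : ((b ∩ board) \ (A ∪ B) ∪ (N \ B : Finset Edge)).encard ≤ (p + c : ℕ) := by
    have hb_sub : (b ∩ board) \ (A ∪ B) ⊆ b := Set.sdiff_subset.trans Set.inter_subset_left
    have hdebt' : (N \ B : Finset Edge).card ≤ (c : ℕ∞) := Nat.cast_le.2 hdebt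
    rw [Nat.cast_add]
    refine (Set.encard_union_le _ _).trans (add_le_add ?_ ?_)
    · exact (Set.encard_le_encard hb_sub).trans hb_card
    · rwa [Set.encard_coe_eq_coe_finsetCard]
  obtain ⟨mv, hXmv, hmv⟩ := exists_isLegalClaim_superset hboard hX hX_card
  obtain ⟨hbmv, hdebt_paid⟩ := Set.union_subset_iff.1 hXmv
  have hNmv : N ⊆ B ∪ mv := sdiff_le_iff.1 (by exact_mod_cast hdebt_paid)
  refine ⟨mv, hmv, hNmv, fun e he heb heA => ?_⟩
  by_cases heB : e ∈ B
  · simp [heB]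
  · simpa [heB] using hbmv ⟨⟨he, heb⟩, by simp [heA, heB]⟩

lemma OpeningInvariant.exists_claim {win' : Set Edge → Prop} {c : ℕ} {M N A B : Finset Edge}
    (hboard : board.Finite) (hwin' : Monotone win') (hN : (N : Set Edge) ⊆ board)
    (h : OpeningInvariant board win' p c M N A B) :
    ∃ mv, IsLegalClaim board (A ∪ B) (p + c) mv ∧
      ∀ a, IsLegalClaim board (A ∪ (B ∪ mv)) p a →
        OpeningInvariant board win' p c M N (A ∪ a) (B ∪ mv) := by
  obtain ⟨hMA, hA, hAN, hdebt, hnot⟩ := h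
  obtain ⟨b, ⟨hb_card, hb⟩, hnot'⟩ := exists_isTurn_of_not_makerForces hnot
  obtain ⟨mv, hmv, hNmv, hbmv⟩ := exists_isLegalClaim_covering hboard hb_card hN hAN hdebt
  refine ⟨mv, hmv, fun a ha => ?_⟩
  have ha_disj := Finset.disjoint_left.1 (Finset.disjoint_coe.1 ha.disjoint)
  have ha_board := ha.subset_board
  have hturn : IsTurn p a (B ∪ N ∪ M ∪ boardᶜ ∪ b) := by
    refine ⟨by simpa using ha.card_le, Set.disjoint_left.2 fun e he => ?_⟩
    grind
  refine ⟨hMA.trans Finset.subset_union_left, ?_, ?_, ?_, fun hforces => ?_⟩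
  · simp [hA, ha_board]
  · grind [Finset.disjoint_left]
  · simp [Finset.sdiff_eq_empty_iff_subset.2 hNmv]
  · refine hnot' a hturn (hforces.mono hwin' ?_ ?_)
    · grind
    · grind

theorem breakerWins_of_neutralized_opening (hboard : board.Finite) (hwin : Monotone win) {c : ℕ}
    (h : ∀ M : Finset Edge, (M : Set Edge) ⊆ board → M.card ≤ p →
      ∃ (N : Finset Edge) (win' : Set Edge → Prop),
        (N : Set Edge) ⊆ board \ M ∧ N.card ≤ c ∧ Monotone win' ∧ ¬ MakerForces win' p ∅ ∅ ∧
          ∀ A ⊆ board, Disjoint A N → win A → win' (A \ M)) :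
    BreakerWins board win p (p + c) := by
  choose! N win' hN hN_card hwin' hnot hreduce using h
  refine breakerWins_of_invariant hwin (fun A B => ∃ M : Finset Edge, (M : Set Edge) ⊆ board ∧
    M.card ≤ p ∧ OpeningInvariant board (win' M) p c M (N M) A B) ?_ ?_ ?_
  · intro M hM
    have hMb := hM.subset_board
    have hMp := hM.card_le
    refine ⟨M, hMb, hMp, subset_rfl, hMb, ?_, by simpa using hN_card M hMb hMp,
      fun hforces => ?_⟩
    · exact_mod_cast (Set.disjoint_left.2 fun e he hN' => (hN M hMb hMp hN').2 he)
    · exact hnot M hMb hMp (hforces.mono (hwin' M hMb hMp) (by simp) (Set.empty_subset _))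
  · rintro A B ⟨M, hMb, hMp, hJ⟩
    obtain ⟨mv, hmv, hnext⟩ := hJ.exists_claim hboard (hwin' M hMb hMp)
      ((hN M hMb hMp).trans Set.sdiff_subset)
    exact ⟨mv, hmv, fun a ha => ⟨M, hMb, hMp, hnext a ha⟩⟩
  · rintro A B ⟨M, hMb, hMp, hJ⟩ hA
    refine hJ.not_makerForces (.won (hreduce M hMb hMp A hJ.subset_board ?_ hA))
    exact_mod_cast hJ.disjoint_neutral

end Strategies

section Board

variable {m n : ℕ} {S : Set Edge} {e : Edge} {u v : Vtx}

lemma joins_horizontal {x y : ℤ} :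
    joins ((x, y), true) u v ↔
      u = (x, y) ∧ v = (x + 1, y) ∨ u = (x + 1, y) ∧ v = (x, y) := by
  simp only [joins, ends, if_true]
  grind

lemma joins_vertical {x y : ℤ} :
    joins ((x, y), false) u v ↔
      u = (x, y) ∧ v = (x, y + 1) ∨ u = (x, y + 1) ∧ v = (x, y) := by
  simp only [joins, ends, Bool.false_eq_true, if_false]
  grind

lemma joins_comm : joins e u v ↔ joins e v u := Or.comm

lemma joins.ne (h : joins e u v) : u ≠ v := by
  obtain ⟨⟨x, y⟩, _ | _⟩ := e
  · rw [joins_vertical] at h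
    grind
  · rw [joins_horizontal] at h
    grind

lemma mem_sEdges_horizontal {x y : ℤ} :
    ((x, y), true) ∈ sEdges m n ↔ 1 ≤ x ∧ x < m ∧ 1 ≤ y ∧ y ≤ n := by
  simp only [sEdges, lamEdges, lamVtx, ends, Set.mem_ofPred_eq]
  grind

lemma mem_sEdges_vertical {x y : ℤ} :
    ((x, y), false) ∈ sEdges m n ↔ 1 < x ∧ x < m ∧ 1 ≤ y ∧ y < n := by
  simp only [sEdges, lamEdges, lamVtx, ends, Set.mem_ofPred_eq]
  grind

lemma sEdges_finite (m n : ℕ) : (sEdges m n).Finite := by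
  have hbox : (Set.Icc (1 : ℤ) m ×ˢ Set.Icc (1 : ℤ) n).Finite :=
    (Set.finite_Icc 1 _).prod (Set.finite_Icc 1 _)
  refine (hbox.prod Set.finite_univ).subset fun e he => ?_
  obtain ⟨h1, h2, h3, h4⟩ := he.1.1
  exact ⟨⟨⟨h1, h2⟩, h3, h4⟩, trivial⟩

/-- The graph formed by the edges of `S` inside the grid `Λ_{m×n}`. -/
def gridGraph (m n : ℕ) (S : Set Edge) : SimpleGraph Vtx where
  Adj u v := u ∈ lamVtx m n ∧ v ∈ lamVtx m n ∧ ∃ e ∈ S, joins e u v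
  symm := ⟨fun _ _ ⟨hu, hv, e, he, huv⟩ => ⟨hv, hu, e, he, joins_comm.1 huv⟩⟩
  loopless := ⟨fun _ ⟨_, _, _, _, h⟩ => h.ne rfl⟩

lemma forall_mem_cp_iff_isChain {α : Type*} {R : α → α → Prop} :
    ∀ {l : List α}, (∀ p ∈ cp l, R p.1 p.2) ↔ l.IsChain R
  | [] => by simp [cp]
  | [_] => by simp [cp]
  | a :: b :: l => by
    have ih := forall_mem_cp_iff_isChain (R := R) (l := b :: l)
    simp only [cp, List.tail_cons, List.zip_cons_cons, List.forall_mem_cons,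
      List.isChain_cons_cons] at ih ⊢
    rw [ih]

lemma forall_mem_support_mem_lamVtx (hu : u ∈ lamVtx m n) (w : (gridGraph m n S).Walk u v) :
    ∀ x ∈ w.support, x ∈ lamVtx m n := by
  induction w with
  | nil => simpa using hu
  | cons h w ih => exact List.forall_mem_cons.2 ⟨hu, ih h.2.1⟩

theorem hasCrossing_iff_exists_reachable :
    HasCrossing m n S ↔
      ∃ u v : Vtx, u ∈ lamVtx m n ∧ u.1 = 1 ∧ v.1 = m ∧ (gridGraph m n S).Reachable u v := by
  constructor
  · rintro ⟨l, ⟨u, hu, hu1⟩, ⟨v, hv, hvm⟩, hl, hjoin⟩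
    have hne : l ≠ [] := List.ne_nil_of_mem (List.mem_of_mem_head? hu)
    rw [List.head?_eq_some_head hne, Option.some_inj] at hu
    rw [List.getLast?_eq_some_getLast hne, Option.some_inj] at hv
    have hchain : l.IsChain (gridGraph m n S).Adj :=
      (forall_mem_cp_iff_isChain.1 hjoin).imp_of_mem_imp fun a b ha hb hab =>
        ⟨hl a ha, hl b hb, hab⟩
    exact ⟨u, v, hu ▸ hl _ (List.head_mem hne), hu1, hvm,
      hu ▸ hv ▸ (SimpleGraph.Walk.ofSupport l hne hchain).reachable⟩
  · rintro ⟨u, v, hu, hu1, hvm, ⟨w⟩⟩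
    refine ⟨w.support, ⟨u, ?_, hu1⟩, ⟨v, ?_, hvm⟩, forall_mem_support_mem_lamVtx hu w, ?_⟩
    · simp [List.head?_eq_some_head]
    · simp [List.getLast?_eq_some_getLast]
    · exact forall_mem_cp_iff_isChain.2 (w.isChain_adj_support.imp fun _ _ h => h.2.2)

lemma hasCrossing_monotone (m n : ℕ) : Monotone (HasCrossing m n) :=
  fun _ _ hST ⟨l, hleft, hright, hl, hS⟩ =>
    ⟨l, hleft, hright, hl, fun p hp => (hS p hp).imp fun _ he => ⟨hST he.1, he.2⟩⟩

end Board

section Duality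

variable {m n : ℕ} {A B : Set Edge}

/-- The edge of the dual lattice that crosses a given edge. The dual vertex with coordinates
`(a, b)` is the point `(b + 1/2, a - 1/2)` of the plane, so that the dual of `S_{(m+1)×n}` is
`S_{(n+1)×m}`, with left-right crossings of the latter running from bottom to top. -/
def dualEdge : Edge ≃ Edge :=
  Function.Involutive.toPerm
    (fun e => bif e.2 then ((e.1.2, e.1.1), true) else ((e.1.2 + 1, e.1.1 - 1), false))
    (by rintro ⟨⟨x, y⟩, _ | _⟩ <;> simp)

lemma dualEdge_horizontal (x y : ℤ) : dualEdge ((x, y), true) = ((y, x), true) := rfl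

lemma dualEdge_vertical (x y : ℤ) : dualEdge ((x, y), false) = ((y + 1, x - 1), false) := rfl

lemma sum_darts_eq_add_sub {V : Type*} {G : SimpleGraph V} {f g : V → V → ℤ} {t : V → ℤ}
    (h : ∀ a b, G.Adj a b → f a b = g a b + (t b - t a)) {u v : V} (w : G.Walk u v) :
    (w.darts.map fun d => f d.fst d.snd).sum =
      (w.darts.map fun d => g d.fst d.snd).sum + (t v - t u) := by
  induction w with
  | nil => simp
  | cons hadj w ih =>
    simp only [SimpleGraph.Walk.darts_cons, List.map_cons, List.sum_cons, ih, h _ _ hadj]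
    ring

/-- The signed contribution of the step from `a` to `b` of a dual path to the number of times
this path crosses the ray that points left from the vertex `v`. -/
def rayCrossing (v a b : Vtx) : ℤ :=
  if a.2 < v.1 then (if v.2 < b.1 then 1 else 0) - (if v.2 < a.1 then 1 else 0) else 0

/-- The number of times, counted with sign, that a dual path crosses the ray pointing left from
the vertex `v`. -/
def crossingIndex (v : Vtx) {G : SimpleGraph Vtx} {a b : Vtx} (w : G.Walk a b) : ℤ :=
  (w.darts.map fun d => rayCrossing v d.fst d.snd).sum

variable {a b u v : Vtx}

lemma crossingIndex_of_left (w : (gridGraph n m B).Walk a b) (hv : v.1 = 1) :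
    crossingIndex v w = 0 := by
  have hstep : ∀ c d, (gridGraph n m B).Adj c d → rayCrossing v c d = 0 := by
    rintro c d ⟨⟨-, -, hc, -⟩, -⟩
    simp [rayCrossing, hv, hc]
  simpa [crossingIndex] using sum_darts_eq_add_sub (g := 0) (t := 0) (by simpa using hstep) w

lemma crossingIndex_of_right (w : (gridGraph (n + 1) m B).Walk a b) (ha : a.1 = 1)
    (hb : b.1 = n + 1) (hv : v ∈ lamVtx (m + 1) n) (hvm : v.1 = m + 1) :
    crossingIndex v w = 1 := by
  have hstep : ∀ c d, (gridGraph (n + 1) m B).Adj c d → rayCrossing v c d =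
      0 + ((if v.2 < d.1 then 1 else 0) - (if v.2 < c.1 then 1 else 0)) := by
    rintro c d ⟨⟨-, -, -, hc⟩, -⟩
    simp [rayCrossing, hvm, Int.lt_add_one_iff.2 hc]
  obtain ⟨-, -, hv1, hvn⟩ := hv
  have := sum_darts_eq_add_sub (g := 0) hstep w
  simpa [crossingIndex, ha, hb, hv1.not_gt, Int.lt_add_one_iff.2 hvn] using this

lemma crossingIndex_add_one_fst {x y : ℤ} (w : (gridGraph n m (dualEdge '' B)).Walk a b)
    (he : ((x, y), true) ∉ B) : crossingIndex (x + 1, y) w = crossingIndex (x, y) w := by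
  have hstep : ∀ c d, (gridGraph n m (dualEdge '' B)).Adj c d →
      rayCrossing (x + 1, y) c d = rayCrossing (x, y) c d + (0 - 0) := by
    rintro c d ⟨-, -, _, ⟨⟨⟨x', y'⟩, _ | _⟩, he', rfl⟩, hjoin⟩
    · rw [dualEdge_vertical, joins_vertical] at hjoin
      grind [rayCrossing]
    · rw [dualEdge_horizontal, joins_horizontal] at hjoin
      grind [rayCrossing]
  simpa [crossingIndex] using sum_darts_eq_add_sub (t := 0) hstep w

lemma crossingIndex_add_one_snd {x y : ℤ} (w : (gridGraph n m (dualEdge '' B)).Walk a b)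
    (ha : a.1 ≠ y + 1) (hb : b.1 ≠ y + 1) (he : ((x, y), false) ∉ B) :
    crossingIndex (x, y + 1) w = crossingIndex (x, y) w := by
  have hstep : ∀ c d, (gridGraph n m (dualEdge '' B)).Adj c d →
      rayCrossing (x, y + 1) c d = rayCrossing (x, y) c d +
        ((if d.1 = y + 1 ∧ d.2 < x then -1 else 0) -
          (if c.1 = y + 1 ∧ c.2 < x then -1 else 0)) := by
    rintro c d ⟨-, -, _, ⟨⟨⟨x', y'⟩, _ | _⟩, he', rfl⟩, hjoin⟩
    · rw [dualEdge_vertical, joins_vertical] at hjoin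
      grind [rayCrossing]
    · rw [dualEdge_horizontal, joins_horizontal] at hjoin
      grind [rayCrossing]
  simpa [crossingIndex, ha, hb] using sum_darts_eq_add_sub hstep w

lemma crossingIndex_eq_of_adj (w : (gridGraph (n + 1) m (dualEdge '' B)).Walk a b) (ha : a.1 = 1)
    (hb : b.1 = n + 1) (hAB : Disjoint A B) (huv : (gridGraph (m + 1) n A).Adj u v) :
    crossingIndex u w = crossingIndex v w := by
  obtain ⟨⟨-, -, hu1, hun⟩, ⟨-, -, hv1, hvn⟩, ⟨⟨x, y⟩, _ | _⟩, he, hjoin⟩ := huv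
  all_goals have heB := Set.disjoint_left.1 hAB he
  · have hy : 1 ≤ y ∧ y < n := by
      rw [joins_vertical] at hjoin
      grind
    have hindex := crossingIndex_add_one_snd w (by lia) (by lia) heB
    rcases joins_vertical.1 hjoin with ⟨rfl, rfl⟩ | ⟨rfl, rfl⟩
    · exact hindex.symm
    · exact hindex
  · have hindex := crossingIndex_add_one_fst w heB
    rcases joins_horizontal.1 hjoin with ⟨rfl, rfl⟩ | ⟨rfl, rfl⟩
    · exact hindex.symm
    · exact hindex

theorem not_disjoint_of_hasCrossing_of_hasCrossing_dual (hA : HasCrossing (m + 1) n A)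
    (hB : HasCrossing (n + 1) m (dualEdge '' B)) : ¬ Disjoint A B := by
  intro hAB
  obtain ⟨u, v, hu, hu1, hvm, ⟨w⟩⟩ := hasCrossing_iff_exists_reachable.1 hA
  obtain ⟨a, b, -, ha1, hbn, ⟨w'⟩⟩ := hasCrossing_iff_exists_reachable.1 hB
  push_cast at hvm hbn
  have hv := forall_mem_support_mem_lamVtx hu w v w.end_mem_support
  have hconst {c d : Vtx} (π : (gridGraph (m + 1) n A).Walk c d) :
      crossingIndex c w' = crossingIndex d w' := by
    induction π with
    | nil => rfl
    | cons hadj _ ih => exact (crossingIndex_eq_of_adj w' ha1 hbn hAB hadj).trans ih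
  have hindex := hconst w
  simp [crossingIndex_of_left w' hu1, crossingIndex_of_right w' ha1 hbn hv hvm] at hindex

theorem not_makerForces_hasCrossing (n p : ℕ) :
    ¬ MakerForces (HasCrossing (n + 1) n) p ∅ ∅ :=
  not_makerForces_of_selfDual dualEdge fun _ _ => not_disjoint_of_hasCrossing_of_hasCrossing_dual

end Duality

section Blocks

variable {k m n o : ℕ} {S : Set Edge}

/-- Translation of edges by `o` columns to the right. -/
def shift (o : ℤ) : Edge ≃ Edge :=
  ((Equiv.addRight o).prodCongr (Equiv.refl ℤ)).prodCongr (Equiv.refl Bool)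

lemma shift_apply (o x y : ℤ) (b : Bool) : shift o ((x, y), b) = ((x + o, y), b) := rfl

lemma fst_le_fst_add_one_of_adj {a b : Vtx} (h : (gridGraph m n S).Adj a b) :
    b.1 ≤ a.1 + 1 := by
  obtain ⟨-, -, ⟨⟨x, y⟩, _ | _⟩, -, hjoin⟩ := h
  · rw [joins_vertical] at hjoin
    grind
  · rw [joins_horizontal] at hjoin
    grind

lemma gridGraph_block_adj {a b : Vtx} (h : (gridGraph m n S).Adj a b) (ha : o < a.1)
    (hak : a.1 < o + k) (hb : o + 1 < b.1) :
    (gridGraph k n (sEdges k n ∩ shift o ⁻¹' S)).Adj (a.1 - o, a.2) (b.1 - o, b.2) := by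
  obtain ⟨⟨-, -, ha1, han⟩, ⟨-, -, hb1, hbn⟩, ⟨⟨x, y⟩, _ | _⟩, he, hjoin⟩ := h
  · rw [joins_vertical] at hjoin
    refine ⟨?_, ?_, ((x - o, y), false), ⟨mem_sEdges_vertical.2 ?_, ?_⟩, joins_vertical.2 ?_⟩
    all_goals grind [lamVtx, shift_apply]
  · rw [joins_horizontal] at hjoin
    refine ⟨?_, ?_, ((x - o, y), true), ⟨mem_sEdges_horizontal.2 ?_, ?_⟩, joins_horizontal.2 ?_⟩
    all_goals grind [lamVtx, shift_apply]

/-- The left-right path is followed until it first reaches the right-hand side of the block; from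
the last visit to the left-hand side of the block on, it stays inside the block. -/
theorem HasCrossing.block (h : HasCrossing m n S) (hk : 2 ≤ k) (hok : o + k ≤ m) :
    HasCrossing k n (sEdges k n ∩ shift o ⁻¹' S) := by
  by_contra hno
  rw [hasCrossing_iff_exists_reachable] at hno
  obtain ⟨u, v, hu, hu1, hvm, huv⟩ := hasCrossing_iff_exists_reachable.1 h
  set G := gridGraph k n (sEdges k n ∩ shift o ⁻¹' S)
  let Q (v : Vtx) : Prop := o < v.1 → v.1 < o + k ∧
    ∃ u ∈ lamVtx k n, u.1 = 1 ∧ G.Reachable u (v.1 - o, v.2)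
  have hQ_left {v : Vtx} (hv : v ∈ lamVtx m n) (hvo : v.1 = o + 1) : Q v := fun _ =>
    ⟨by lia, (v.1 - o, v.2), ⟨by grind, by grind, hv.2.2⟩, by grind, .rfl⟩
  have hQ_step {a b : Vtx} (hab : (gridGraph m n S).Adj a b) (ha : Q a) : Q b := by
    intro hob
    by_cases hbo : b.1 = o + 1
    · exact hQ_left hab.2.1 hbo hob
    have hba := fst_le_fst_add_one_of_adj hab
    obtain ⟨hak, u, hu, hu1, hua⟩ := ha (by lia)
    have hub := hua.trans (gridGraph_block_adj hab (by lia) hak (by lia)).reachable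
    refine ⟨?_, u, hu, hu1, hub⟩
    by_contra! hbk
    exact hno ⟨u, _, hu, hu1, by grind, hub⟩
  have hQ {v : Vtx} (huv : Relation.ReflTransGen (gridGraph m n S).Adj u v) : Q v := by
    induction huv with
    | refl => exact fun hou => hQ_left hu (by lia) hou
    | tail _ hab ih => exact hQ_step hab ih
  have := (hQ ((SimpleGraph.reachable_iff_reflTransGen _ _).1 huv) (by lia)).1
  lia

lemma not_makerForces_hasCrossing_preimage_shift (n p : ℕ) (o : ℤ) :
    ¬ MakerForces (fun S => HasCrossing (n + 1) n (shift o ⁻¹' S)) p ∅ ∅ := by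
  intro h
  refine not_makerForces_hasCrossing n p ?_
  simpa [Set.preimage_image_eq _ (shift o).injective] using h.preimage (shift o)

end Blocks

section Neutralization

variable {α : Type*} [DecidableEq α] {adj : α → Finset α} {D : Set α} {M N : Finset α}

/-- The elements of `N` neutralize those of `M` on the board `D` with neighbourhoods `adj`: an edge
of `M` either has all its neighbours on the board in `M ∪ N`, so that a path avoiding `N` continues
from it to edges of `M` only, or it is away from the boundary and has at most one neighbour outside
`N`, so that a path avoiding `N` cannot pass through it. -/
def Neutralizes (adj : α → Finset α) (D : Set α) (N M : Finset α) : Prop :=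
  ∀ e ∈ M, (∀ f ∈ adj e, f ∈ D → f ∈ M ∪ N) ∨ (↑(adj e) ⊆ D ∧ (adj e \ N).card ≤ 1)

lemma Neutralizes.mem {e f : α} (h : Neutralizes adj D N M) (he : e ∈ M) (hf : f ∈ adj e)
    (hfD : f ∈ D \ N) (hend : ¬ ↑(adj e) ⊆ D ∨ ∃ g ∈ adj e, g ∉ N ∧ g ≠ f) : f ∈ M := by
  rcases h e he with hM | ⟨hD, hcard⟩
  · exact (Finset.mem_union.1 (hM f hf hfD.1)).resolve_right hfD.2
  · obtain ⟨g, hg, hgN, hgf⟩ := hend.resolve_left (not_not_intro hD)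
    exact absurd (Finset.card_le_one.1 hcard g (by simp [hg, hgN]) f
      (by simpa [hf] using hfD.2)) hgf

lemma exists_neutralizes (adj : α → Finset α) (D : Set α) (M : Finset α) {k : ℕ}
    (hk : ∀ e ∈ M, (adj e).card ≤ k + 1) :
    ∃ N : Finset α, ↑N ⊆ D \ M ∧ N.card ≤ k * M.card ∧ Neutralizes adj D N M := by
  have hF : ∀ e ∈ M, ∃ F : Finset α, ↑F ⊆ D \ M ∧ F.card ≤ k ∧
      ((∀ f ∈ adj e, f ∈ D → f ∈ M ∪ F) ∨ (↑(adj e) ⊆ D ∧ (adj e \ F).card ≤ 1)) := by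
    classical
    intro e he
    by_cases hadj : ↑(adj e) ⊆ D \ M
    · obtain ⟨F, hF, hcard⟩ := Finset.exists_subset_card_eq (Nat.sub_le (adj e).card 1)
      have := hk e he
      refine ⟨F, (Finset.coe_subset.2 hF).trans hadj, by lia,
        .inr ⟨hadj.trans Set.sdiff_subset, ?_⟩⟩
      rw [Finset.card_sdiff_of_subset hF]
      lia
    · obtain ⟨g, hg, hgD⟩ := Set.not_subset.1 hadj
      have hlt : ({f ∈ adj e | f ∈ D \ ↑M} : Finset α).card < (adj e).card :=
        Finset.card_lt_card (Finset.filter_ssubset.2 ⟨g, hg, hgD⟩)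
      refine ⟨{f ∈ adj e | f ∈ D \ ↑M}, fun f hf => (Finset.mem_filter.1 hf).2, ?_, .inl ?_⟩
      · have := hk e he
        lia
      · grind
  choose! F hFD hFk hF using hF
  refine ⟨M.biUnion F, by simpa using hFD, mul_comm k _ ▸ Finset.card_biUnion_le_card_mul _ _ _ hFk,
    fun e he => ?_⟩
  have hsub : F e ⊆ M.biUnion F := Finset.subset_biUnion_of_mem F he
  exact (hF e he).imp (fun h f hf hfD => Finset.union_subset_union_right hsub (h f hf hfD))
    fun h => ⟨h.1, (Finset.card_le_card (Finset.sdiff_subset_sdiff le_rfl hsub)).trans h.2⟩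

end Neutralization

section NeutralizedCrossing

variable {m n : ℕ} {e f : Edge} {u v : Vtx}

/-- The edges of the square lattice at the vertex `v`. -/
def edgesAt (v : Vtx) : Finset Edge :=
  {(v, true), (v, false), ((v.1 - 1, v.2), true), ((v.1, v.2 - 1), false)}

lemma joins.mem_edgesAt_left (h : joins e u v) : e ∈ edgesAt u := by
  obtain ⟨⟨x, y⟩, _ | _⟩ := e
  · rw [joins_vertical] at h
    grind [edgesAt]
  · rw [joins_horizontal] at h
    grind [edgesAt]

lemma joins.mem_edgesAt_right (h : joins e u v) : e ∈ edgesAt v :=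
  (joins_comm.1 h).mem_edgesAt_left

/-- The edges of the square lattice that share an endpoint with `e`. -/
def adjEdges (e : Edge) : Finset Edge :=
  (edgesAt (ends e).1).erase e ∪ (edgesAt (ends e).2).erase e

lemma card_adjEdges_le (e : Edge) : (adjEdges e).card ≤ 6 := by
  have hends : joins e (ends e).1 (ends e).2 := .inl ⟨rfl, rfl⟩
  have hcard {v : Vtx} (he : e ∈ edgesAt v) : ((edgesAt v).erase e).card ≤ 3 := by
    rw [Finset.card_erase_of_mem he]
    exact Nat.sub_le_sub_right Finset.card_le_four 1
  exact (Finset.card_union_le _ _).trans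
    (add_le_add (hcard hends.mem_edgesAt_left) (hcard hends.mem_edgesAt_right))

lemma joins.mem_adjEdges_iff (h : joins e u v) :
    f ∈ adjEdges e ↔ f ≠ e ∧ (f ∈ edgesAt u ∨ f ∈ edgesAt v) := by
  rcases h with ⟨rfl, rfl⟩ | ⟨rfl, rfl⟩ <;> grind [adjEdges]

lemma not_adjEdges_subset_sEdges (h : joins e u v) (he : e ∈ sEdges m n)
    (hu : u.1 = 1 ∨ u.1 = m) : ¬ ↑(adjEdges e) ⊆ sEdges m n := by
  have hnot : (u, false) ∉ sEdges m n := fun hmem => hmem.2 ⟨rfl, hu⟩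
  refine fun hsub => hnot (hsub (h.mem_adjEdges_iff.2 ⟨?_, .inl (by simp [edgesAt])⟩))
  rintro rfl
  exact hnot he

lemma fst_le_fst_add_length {S : Set Edge} (π : (gridGraph m n S).Walk u v) :
    v.1 ≤ u.1 + π.length := by
  induction π with
  | nil => simp
  | cons hadj π ih =>
    have := fst_le_fst_add_one_of_adj hadj
    rw [SimpleGraph.Walk.length_cons]
    lia

variable {L : ℕ} {V : ℕ → Vtx} {E : ℕ → Edge} {M N : Finset Edge} {X : Set Edge}

lemma injOn_of_joins (hV : Set.InjOn V (Set.Iic L))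
    (hE : ∀ i < L, joins (E i) (V i) (V (i + 1))) : Set.InjOn E (Set.Iio L) := by
  intro i hi j hj hij
  have hVij {a b : ℕ} (ha : a ≤ L) (hb : b ≤ L) : V a = V b ↔ a = b := hV.eq_iff ha hb
  have hEi := hE i hi
  have hEj := hE j hj
  rw [Set.mem_Iio] at hi hj
  simp only [joins, ← hij] at hEi hEj
  grind

lemma mem_iff_succ_mem_of_neutralizes (hN : Neutralizes adjEdges (sEdges m n) N M)
    (hV : Set.InjOn V (Set.Iic L)) (hE : ∀ i < L, joins (E i) (V i) (V (i + 1)))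
    (hED : ∀ i < L, E i ∈ sEdges m n \ N) (hV0 : (V 0).1 = 1) (hVL : (V L).1 = m) {i : ℕ}
    (hi : i + 1 < L) : E i ∈ M ↔ E (i + 1) ∈ M := by
  have hne {j k : ℕ} (hj : j < L) (hk : k < L) (hjk : j ≠ k) : E j ≠ E k :=
    fun h => hjk (injOn_of_joins hV hE hj hk h)
  have hsucc {j : ℕ} (hj : j + 1 < L) : E (j + 1) ∈ adjEdges (E j) :=
    (hE j (by lia)).mem_adjEdges_iff.2
      ⟨hne hj (by lia) (by lia), .inr (hE (j + 1) hj).mem_edgesAt_left⟩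
  have hpred {j : ℕ} (hj : j + 1 < L) : E j ∈ adjEdges (E (j + 1)) :=
    (hE (j + 1) hj).mem_adjEdges_iff.2
      ⟨hne (by lia) hj (by lia), .inl (hE j (by lia)).mem_edgesAt_right⟩
  refine ⟨fun h => hN.mem h (hsucc hi) (hED _ hi) ?_,
    fun h => hN.mem h (hpred hi) (hED _ (by lia)) ?_⟩
  · obtain _ | j := i
    · exact .inl (not_adjEdges_subset_sEdges (hE 0 (by lia)) (hED 0 (by lia)).1 (.inl hV0))
    · exact .inr ⟨E j, hpred (by lia), (hED j (by lia)).2, hne (by lia) hi (by lia)⟩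
  · obtain rfl | hi' : i + 2 = L ∨ i + 2 < L := by lia
    · exact .inl (not_adjEdges_subset_sEdges (joins_comm.1 (hE (i + 1) hi)) (hED _ hi).1 (.inr hVL))
    · exact .inr ⟨E (i + 2), hsucc hi', (hED _ hi').2, hne hi' (by lia) (by lia)⟩

/-- A crossing path with an edge in `M` would consist of edges of `M`, but it is longer than
`M.card`. -/
theorem HasCrossing.sdiff_of_neutralizes (h : HasCrossing m n X) (hX : X ⊆ sEdges m n)
    (hXN : Disjoint X N) (hM : M.card + 1 < m) (hN : Neutralizes adjEdges (sEdges m n) N M) :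
    HasCrossing m n (X \ M) := by
  classical
  obtain ⟨u, v, hu, hu1, hvm, ⟨w⟩⟩ := hasCrossing_iff_exists_reachable.1 h
  obtain ⟨π, hπ⟩ := w.toPath
  have hadj : ∀ i < π.length, _ := fun i hi => π.adj_getVert_succ hi
  choose! E hEX hE using fun i hi => (hadj i hi).2.2
  have hV := hπ.getVert_injOn
  have hiff {i : ℕ} (hi : i + 1 < π.length) : E i ∈ M ↔ E (i + 1) ∈ M :=
    mem_iff_succ_mem_of_neutralizes hN hV hE
      (fun j hj => ⟨hX (hEX j hj), Set.disjoint_left.1 hXN (hEX j hj)⟩) (by simpa) (by simpa) hi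
  have hzero {i : ℕ} (hi : i < π.length) : E i ∈ M ↔ E 0 ∈ M := by
    induction i with
    | zero => rfl
    | succ i ih => rw [← hiff hi, ih (by lia)]
  have hlength := fst_le_fst_add_length π
  have hE0 : E 0 ∉ M := by
    intro hE0
    have := Finset.card_le_card_of_injOn (s := Finset.range π.length) E
      (fun i hi => (hzero (Finset.mem_range.1 hi)).2 hE0)
      (by simpa [← Set.Iio_def] using injOn_of_joins hV hE)
    rw [Finset.card_range] at this
    lia
  have hreach {i : ℕ} (hi : i ≤ π.length) :
      (gridGraph m n (X \ M)).Reachable u (π.getVert i) := by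
    induction i with
    | zero => simp
    | succ i ih =>
      obtain ⟨ha, hb, -⟩ := hadj i hi
      exact (ih (by lia)).trans (SimpleGraph.Adj.reachable
        ⟨ha, hb, E i, ⟨hEX i hi, (hzero hi).not.2 hE0⟩, hE i hi⟩)
  exact hasCrossing_iff_exists_reachable.2 ⟨u, v, hu, hu1, hvm, by simpa using hreach le_rfl⟩

end NeutralizedCrossing

section NeutralizedBlock

variable {k m n o r : ℕ} {M M' : Finset Edge} {e : Edge}

lemma shift_mem_sEdges (he : e ∈ sEdges k n) (hok : o + k ≤ m) : shift o e ∈ sEdges m n := by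
  obtain ⟨⟨x, y⟩, _ | _⟩ := e
  · rw [mem_sEdges_vertical] at he
    rw [shift_apply, mem_sEdges_vertical]
    lia
  · rw [mem_sEdges_horizontal] at he
    rw [shift_apply, mem_sEdges_horizontal]
    lia

lemma exists_block_card_le (w n : ℕ) (hM : M.card < k * (r + 1)) :
    ∃ i < k, ∃ M' : Finset Edge, M'.card ≤ r ∧
      ∀ e ∈ sEdges w n, shift (i * w : ℕ) e ∈ M → e ∈ M' := by
  let block (e : Edge) : ℕ := ((e.1.1 - 1) / w).toNat
  obtain ⟨i, hi, hcard⟩ := Finset.exists_card_fiber_lt_of_card_lt_mul (f := block)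
    (t := Finset.range k) (s := M) (n := r + 1) (by simpa)
  refine ⟨i, Finset.mem_range.1 hi,
    {e ∈ M | block e = i}.map (shift (i * w : ℕ)).symm.toEmbedding,
    by simpa [Nat.lt_succ_iff] using hcard, fun e he heM => ?_⟩
  obtain ⟨⟨x, y⟩, b⟩ := e
  have hx : 1 ≤ x := he.1.1.1
  have hxw : x ≤ w := he.1.1.2.1
  have hblock : block (shift (i * w : ℕ) ((x, y), b)) = i := by
    have hcol : x + (i * w : ℕ) - 1 = x - 1 + i * w := by
      push_cast
      ring
    simp only [block, shift_apply, hcol]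
    rw [Int.add_mul_ediv_right _ _ (by lia), Int.ediv_eq_zero_of_lt (by lia) (by lia)]
    exact congrArg Int.toNat (zero_add _)
  exact Finset.mem_map_equiv.2 (Finset.mem_filter.2 ⟨heM, hblock⟩)

lemma exists_neutralized_block (hr : r < n) (hom : o + (n + 1) ≤ m) (hM' : M'.card ≤ r)
    (hMM' : ∀ e ∈ sEdges (n + 1) n, shift o e ∈ M → e ∈ M') :
    ∃ N : Finset Edge, ↑N ⊆ sEdges m n \ M ∧ N.card ≤ 5 * r ∧ ∀ A : Set Edge, Disjoint A N →
      HasCrossing m n A → HasCrossing (n + 1) n (shift o ⁻¹' (A \ M)) := by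
  obtain ⟨N, hND, hcard, hN⟩ :=
    exists_neutralizes adjEdges (sEdges (n + 1) n) M' (k := 5) fun e _ => card_adjEdges_le e
  refine ⟨N.map (shift o).toEmbedding, ?_, by rw [Finset.card_map]; lia, fun A hAN hA => ?_⟩
  · rw [Finset.coe_map, Set.image_subset_iff]
    exact fun e he => ⟨shift_mem_sEdges (hND he).1 hom,
      fun heM => (hND he).2 (hMM' e (hND he).1 heM)⟩
  · have hblock := hA.block (by lia) hom
    have hdisj : Disjoint (sEdges (n + 1) n ∩ shift o ⁻¹' A) N :=
      Set.disjoint_left.2 fun e he heN =>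
        Set.disjoint_left.1 hAN he.2 (Finset.mem_map_of_mem (shift o).toEmbedding heN)
    refine hasCrossing_monotone _ _ ?_
      (hblock.sdiff_of_neutralizes Set.inter_subset_left hdisj (by lia) hN)
    exact fun e he => ⟨he.1.2, fun heM => he.2 (hMM' e he.1.1 heM)⟩

end NeutralizedBlock

lemma div_succ_lt_ceilDiv {p r : ℕ} (hp : 1 ≤ p) (hr : 1 ≤ r) : p / (r + 1) < (p + r - 1) / r := by
  rw [Nat.lt_iff_add_one_le, Nat.le_div_iff_mul_le hr, add_one_mul]
  have hle : p / (r + 1) * r + p / (r + 1) ≤ p := Nat.div_mul_le_self p (r + 1)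
  obtain h | h := Nat.eq_zero_or_pos (p / (r + 1))
  · simp only [h, zero_mul]
    lia
  · lia

theorem breaker_wins_with_extra_power_general (m n p r : ℕ) (hn : r < n)
    (hm : (p / (r + 1) + 1) * (n + 1) ≤ m) :
    BreakerWins (sEdges m n) (HasCrossing m n) p (p + 5 * r) := by
  refine breakerWins_of_neutralized_opening (sEdges_finite m n) (hasCrossing_monotone m n)
    fun M _ hM => ?_
  have hp : p < (p / (r + 1) + 1) * (r + 1) :=
    Nat.lt_mul_of_div_lt (Nat.lt_succ_self _) r.succ_pos
  obtain ⟨i, hi, M', hM', hMM'⟩ := exists_block_card_le (n + 1) n (hM.trans_lt hp)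
  have him : i * (n + 1) + (n + 1) ≤ m :=
    i.succ_mul (n + 1) ▸ (Nat.mul_le_mul_right (n + 1) hi).trans hm
  obtain ⟨N, hNM, hN, hwin⟩ := exists_neutralized_block hn him hM' hMM'
  exact ⟨N, _, hNM, hN, fun _ _ h => hasCrossing_monotone _ _ (Set.preimage_mono h),
    not_makerForces_hasCrossing_preimage_shift n p _, fun A _ => hwin A⟩

/-- **Proposition.** For all (positive) natural numbers `m, n, p, r` with `n > r` and
`m ≥ ⌈p/r⌉ · (n+1)`, Breaker has a winning strategy for the `(p, p+5r)`-crossing game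
on `S_{m×n}`. (Here `⌈p/r⌉ = (p + r - 1)/r` in natural division.) -/
theorem breaker_wins_with_extra_power
    (m n p r : ℕ) (hp : 1 ≤ p) (hr : 1 ≤ r) (hn : r < n)
    (hm : ((p + r - 1) / r) * (n + 1) ≤ m) :
    BreakerWins (sEdges m n) (HasCrossing m n) p (p + 5 * r) :=
  breaker_wins_with_extra_power_general m n p r hn
    ((Nat.mul_le_mul_right (n + 1) (div_succ_lt_ceilDiv hp hr)).trans hm)

end CrossingGames
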